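/- Let μ, ν be Borel probability measures on ℝ with finite first moments and μ ≤_cd ν. For every u ∈ (0,1), if S_u is a shadow of μ_u in ν, then c(u) = ∫ x μ_u(dx) − ∫ x S_u(dx), where c(u) = sup_{k∈ℝ} (C_{μ_u}(k) − C_ν(k)). -/

import Mathlib

open MeasureTheory Set Filter

noncomputable section

/-- `η ∈ 𝓜`: a finite Borel measure on ℝ with finite first moment. -/
def MemM (η : MeasureTheory.Measure ℝ) : Prop :=
  MeasureTheory.IsFiniteMeasure η ∧ MeasureTheory.Integrable (fun x : ℝ => x) η

/-- Convex-decreasing order `≤_cd`. -/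
def LeCD (η χ : MeasureTheory.Measure ℝ) : Prop :=
  ∀ f : ℝ → ℝ, ConvexOn ℝ Set.univ f → Antitone f →
    MeasureTheory.Integrable f η → MeasureTheory.Integrable f χ →
    ∫ x, f x ∂η ≤ ∫ x, f x ∂χ

/-- Positive convex-decreasing order `≤_pcd`. -/
def LePCD (η χ : MeasureTheory.Measure ℝ) : Prop :=
  ∀ f : ℝ → ℝ, (∀ x, 0 ≤ f x) → ConvexOn ℝ Set.univ f → Antitone f →
    MeasureTheory.Integrable f η → MeasureTheory.Integrable f χ →
    ∫ x, f x ∂η ≤ ∫ x, f x ∂χ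

/-- Positive convex order `≤_pc`. -/
def LePC (η χ : MeasureTheory.Measure ℝ) : Prop :=
  ∀ f : ℝ → ℝ, (∀ x, 0 ≤ f x) → ConvexOn ℝ Set.univ f →
    MeasureTheory.Integrable f η → MeasureTheory.Integrable f χ →
    ∫ x, f x ∂η ≤ ∫ x, f x ∂χ

/-- A supermartingale coupling of `η` and `χ`. -/
def IsSupermartingaleCoupling (η χ : MeasureTheory.Measure ℝ)
    (π : MeasureTheory.Measure (ℝ × ℝ)) : Prop :=
  MeasureTheory.IsProbabilityMeasure π ∧
  π.map Prod.fst = η ∧ π.map Prod.snd = χ ∧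
  MeasureTheory.Integrable (fun p : ℝ × ℝ => p.2) π ∧
  ∀ B : Set ℝ, MeasurableSet B →
    ∫ p in B ×ˢ (Set.univ : Set ℝ), (p : ℝ × ℝ).2 ∂π ≤ ∫ x in B, x ∂η

/-- The potential function `P_η(k) = ∫ (k-x)⁺ η(dx)`. -/
def Ppot (η : MeasureTheory.Measure ℝ) (k : ℝ) : ℝ := ∫ x, max (k - x) 0 ∂η

/-- The potential function `C_η(k) = ∫ (x-k)⁺ η(dx)`. -/
def Cpot (η : MeasureTheory.Measure ℝ) (k : ℝ) : ℝ := ∫ x, max (x - k) 0 ∂η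

/-- The left-continuous quantile function `G_η(u) = sup {k | η((-∞,k]) < u}`. -/
def quantile (η : MeasureTheory.Measure ℝ) (u : ℝ) : ℝ :=
  sSup {k : ℝ | (η (Set.Iic k)).toReal < u}

/-- The lift `μ_u = μ|_{(-∞,G(u))} + (u - μ((-∞,G(u)))) δ_{G(u)}`, with `μ_0 = 0`, `μ_1 = μ`. -/
def muU (μ : MeasureTheory.Measure ℝ) (u : ℝ) : MeasureTheory.Measure ℝ :=
  if u ≤ 0 then 0
  else if 1 ≤ u then μ
  else μ.restrict (Set.Iio (quantile μ u)) +
    (ENNReal.ofReal (u - (μ (Set.Iio (quantile μ u))).toReal)) •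
      MeasureTheory.Measure.dirac (quantile μ u)

/-- `S` is a shadow of `μ` in `ν`. -/
def IsShadow (μ ν S : MeasureTheory.Measure ℝ) : Prop :=
  MemM S ∧ LeCD μ S ∧ (∀ A : Set ℝ, MeasurableSet A → S A ≤ ν A) ∧
  ∀ η : MeasureTheory.Measure ℝ, MemM η → LeCD μ η →
    (∀ A : Set ℝ, MeasurableSet A → η A ≤ ν A) → LeCD S η

/-- `h` is the convex hull of `f`. -/
def IsConvexHullFn (f h : ℝ → ℝ) : Prop :=
  ConvexOn ℝ Set.univ h ∧ (∀ x, h x ≤ f x) ∧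
  ∀ g : ℝ → ℝ, ConvexOn ℝ Set.univ g → (∀ x, g x ≤ f x) → ∀ x, g x ≤ h x

/-- The class `𝒟(a,b)`. -/
def MemD (a b : ℝ) (f : ℝ → ℝ) : Prop :=
  (∀ x, 0 ≤ f x) ∧ Monotone f ∧ ConvexOn ℝ Set.univ f ∧
  Filter.Tendsto f Filter.atBot (nhds 0) ∧
  Filter.Tendsto (fun z => f z - (a * z - b)) Filter.atTop (nhds 0)

/-- The topological support of a measure. -/
def msupport (η : MeasureTheory.Measure ℝ) : Set ℝ :=
  {x : ℝ | ∀ U ∈ nhds x, η U ≠ 0}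

/-! Since `S ≤ ν`, write `ν = S + T`. Put-call parity gives
`C_m(k) - C_ν(k) = d - (P_S(k) - P_m(k)) - C_T(k)`, where `d` is the difference of the means of
`m` and `S`. Both subtracted terms are nonnegative, so the claim is that their sum has infimum `0`.

If the gap `P_S - P_m` is bounded below by a positive constant on `[x₀, ∞)`, then `T` cannot charge
`[x₀, ∞)`: replacing a little mass of `S` left of `x₀` by mass of `T` right of `x₀` would keep
`m ≤_cd S` but raise the mean, against the minimality of `S`. The mass to be removed sits to the
right of a point where the gap has a supporting line of positive slope: the gap dominates this line
and hence the put potential of a small multiple of `S` there.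

Now let `δ > 0`. If `d < δ`, the sum is less than `δ` near `+∞`, where it tends to `d`. Otherwise
there is a last point at which the gap is at most `δ / 2`; `T` has no mass beyond it, so just to its
right `C_T` vanishes and the sum is less than `δ`.
-/

open scoped ENNReal NNReal Topology

lemma eventually_nhdsGT_zero_mul_lt {a : ℝ} (ha : 0 < a) (A : ℝ) :
    ∀ᶠ t in 𝓝[>] (0 : ℝ), t * A < a := by
  have hlim : Tendsto (· * A) (𝓝[>] 0) (𝓝 (0 * A)) :=
    ((continuous_mul_const A).tendsto 0).mono_left nhdsWithin_le_nhds
  rw [zero_mul] at hlim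
  exact hlim.eventually_lt_const ha

lemma restrict_apply_eq_zero_of_disjoint {α : Type*} [MeasurableSpace α] {η : Measure α}
    {A B : Set α} (hA : MeasurableSet A) (h : Disjoint A B) : η.restrict B A = 0 := by
  rw [Measure.restrict_apply hA, h.inter_eq, measure_empty]

lemma nnreal_smul_measure_le {α : Type*} [MeasurableSpace α] {c : ℝ≥0} (hc : c ≤ 1)
    (η : Measure α) : c • η ≤ η :=
  Measure.le_iff'.2 fun E => by
    rw [Measure.smul_apply]
    exact smul_le_of_le_one_left zero_le hc

lemma measureReal_Iio_le_of_forall_lt {η : Measure ℝ} [IsFiniteMeasure η] {a c : ℝ}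
    (h : ∀ z < a, η.real (Iio z) ≤ c) : η.real (Iio a) ≤ c := by
  obtain ⟨z, hz_mono, hz_lt, hz_lim⟩ := exists_seq_strictMono_tendsto a
  have hUnion : ⋃ n, Iio (z n) = Iio a := by
    simpa only [biUnion_range] using
      (isLUB_of_tendsto_atTop hz_mono.monotone hz_lim).biUnion_Iio_eq
  have hmono : Monotone fun n => Iio (z n) := fun _ _ hij => Iio_subset_Iio (hz_mono.monotone hij)
  have hlim := tendsto_measure_iUnion_atTop (μ := η) hmono
  rw [hUnion] at hlim
  exact le_of_tendsto' ((ENNReal.tendsto_toReal (measure_ne_top _ _)).comp hlim)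
    fun n => h _ (hz_lt n)

lemma measure_le_of_isLowerSet {ρ σ : Measure ℝ} [NullSingletonClass ρ]
    (h : ∀ k, ρ (Iio k) ≤ σ (Iio k)) {L : Set ℝ} (hL : IsLowerSet L) : ρ L ≤ σ L := by
  rcases L.eq_empty_or_nonempty with rfl | hne
  · simp
  by_cases hb : BddAbove L
  · have hsub : Iio (sSup L) ⊆ L := fun x hx =>
      have ⟨_, hy, hxy⟩ := exists_lt_of_lt_csSup hne hx
      hL hxy.le hy
    calc ρ L ≤ ρ (Iic (sSup L)) := measure_mono fun x hx => le_csSup hb hx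
      _ = ρ (Iio (sSup L)) := measure_congr Iio_ae_eq_Iic.symm
      _ ≤ σ (Iio (sSup L)) := h _
      _ ≤ σ L := measure_mono hsub
  · have hsub (k : ℝ) : Iio k ⊆ L := fun x hx =>
      have ⟨_, hy, hky⟩ := not_bddAbove_iff.1 hb k
      hL (hx.le.trans hky.le) hy
    calc ρ L ≤ ρ (⋃ k : ℝ, Iio k) := measure_mono (by simp [iUnion_Iio])
      _ = ⨆ k : ℝ, ρ (Iio k) := (monotone_Iio (α := ℝ)).measure_iUnion
      _ ≤ σ L := iSup_le fun k => (h k).trans (measure_mono (hsub k))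

lemma lintegral_le_of_antitone {ρ σ : Measure ℝ} [NullSingletonClass ρ]
    (h : ∀ k, ρ (Iio k) ≤ σ (Iio k)) {φ : ℝ → ℝ} (hφ : Antitone φ) (hφ0 : 0 ≤ φ) :
    ∫⁻ s, ENNReal.ofReal (φ s) ∂ρ ≤ ∫⁻ s, ENNReal.ofReal (φ s) ∂σ := by
  simp only [lintegral_eq_lintegral_meas_lt _ (.of_forall hφ0) hφ.measurable.aemeasurable]
  exact lintegral_mono fun t => measure_le_of_isLowerSet h fun _ _ hba ha => ha.trans_le (hφ hba)

lemma exists_supporting_line_of_tendsto_atBot {g : ℝ → ℝ} (hcont : Continuous g)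
    (hg : ∀ k, 0 ≤ g k) (hbot : Tendsto g atBot (𝓝 0)) {x₀ : ℝ} (hx₀ : 0 < g x₀) :
    ∃ b < x₀, ∃ ε > 0, (∀ k ≤ x₀, g b + ε * (k - b) ≤ g k) ∧ g b + ε * (x₀ - b) < g x₀ := by
  obtain ⟨l, hl, hlx⟩ := ((hbot.eventually (gt_mem_nhds hx₀)).and (eventually_lt_atBot x₀)).exists
  obtain ⟨ε, hε, hεl⟩ := exists_pos_mul_lt (sub_pos.2 hl) (x₀ - l)
  obtain ⟨B, hB⟩ := eventually_atBot.1
    ((tendsto_id.const_mul_atBot hε).eventually (eventually_le_atBot (ε * l - g l)))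
  have hBl : min B l ≤ l := min_le_right _ _
  obtain ⟨b, hb, hmin⟩ := (isCompact_Icc (a := min B l) (b := x₀)).exists_isMinOn
    ⟨l, hBl, hlx.le⟩ (f := fun k => g k - ε * k) (by fun_prop)
  have hbl : g b - ε * b ≤ g l - ε * l := hmin ⟨hBl, hlx.le⟩
  have hstrict : g b + ε * (x₀ - b) < g x₀ := by linarith
  refine ⟨b, hb.2.lt_of_ne fun h => ?_, ε, hε, fun k hk => ?_, hstrict⟩
  · rw [h, sub_self, mul_zero, add_zero] at hstrict
    exact hstrict.false
  rcases le_total (min B l) k with hk' | hk'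
  · have hbk : g b - ε * b ≤ g k - ε * k := hmin ⟨hk', hk⟩
    linarith
  · have hkB : ε * k ≤ ε * l - g l := hB k (hk'.trans (min_le_left _ _))
    linarith [hg k]

section Potentials

variable {η χ : Measure ℝ}

lemma MemM.mono (hχ : MemM χ) (h : η ≤ χ) : MemM η :=
  have := hχ.1
  ⟨isFiniteMeasure_of_le χ h, hχ.2.mono_measure h⟩

lemma MemM.add (hη : MemM η) (hχ : MemM χ) : MemM (η + χ) :=
  have := hη.1
  have := hχ.1
  ⟨inferInstance, hη.2.add_measure hχ.2⟩

lemma MemM.integrable_put (hη : MemM η) (k : ℝ) : Integrable (fun x => max (k - x) 0) η :=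
  have := hη.1
  ((integrable_const k).sub hη.2).pos_part

lemma MemM.integrable_call (hη : MemM η) (k : ℝ) : Integrable (fun x => max (x - k) 0) η :=
  have := hη.1
  (hη.2.sub (integrable_const k)).pos_part

lemma Ppot_nonneg (η : Measure ℝ) (k : ℝ) : 0 ≤ Ppot η k :=
  integral_nonneg fun _ => le_max_right _ _

lemma Cpot_nonneg (η : Measure ℝ) (k : ℝ) : 0 ≤ Cpot η k :=
  integral_nonneg fun _ => le_max_right _ _

lemma Ppot_add (hη : MemM η) (hχ : MemM χ) (k : ℝ) : Ppot (η + χ) k = Ppot η k + Ppot χ k :=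
  integral_add_measure (hη.integrable_put k) (hχ.integrable_put k)

lemma Cpot_add (hη : MemM η) (hχ : MemM χ) (k : ℝ) : Cpot (η + χ) k = Cpot η k + Cpot χ k :=
  integral_add_measure (hη.integrable_call k) (hχ.integrable_call k)

lemma Ppot_smul (c : ℝ≥0) (η : Measure ℝ) (k : ℝ) : Ppot (c • η) k = c * Ppot η k :=
  integral_smul_nnreal_measure _ c

lemma Ppot_eq_zero_iff (hη : MemM η) {k : ℝ} : Ppot η k = 0 ↔ η (Iio k) = 0 := by
  rw [Ppot, integral_eq_zero_iff_of_nonneg (f := fun x => max (k - x) 0)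
    (fun _ => le_max_right _ _) (hη.integrable_put k),
    measure_eq_zero_iff_ae_notMem]
  simp [EventuallyEq]

lemma Cpot_eq_zero_iff (hη : MemM η) {k : ℝ} : Cpot η k = 0 ↔ η (Ioi k) = 0 := by
  rw [Cpot, integral_eq_zero_iff_of_nonneg (f := fun x => max (x - k) 0)
    (fun _ => le_max_right _ _) (hη.integrable_call k),
    measure_eq_zero_iff_ae_notMem]
  simp [EventuallyEq]

lemma Cpot_sub_Ppot (hη : MemM η) (k : ℝ) :
    Cpot η k - Ppot η k = ∫ x, x ∂η - η.real univ * k := by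
  have := hη.1
  have hput_call (x : ℝ) : max (x - k) 0 - max (k - x) 0 = x - k := by
    rw [← neg_sub x k, max_zero_sub_max_neg_zero_eq_self]
  rw [Cpot, Ppot, ← integral_sub (hη.integrable_call k) (hη.integrable_put k)]
  simp only [hput_call]
  rw [integral_sub hη.2 (integrable_const k), integral_const, smul_eq_mul]

lemma tendsto_Cpot_atTop (hη : MemM η) : Tendsto (Cpot η) atTop (𝓝 0) := by
  rw [← integral_zero ℝ ℝ (μ := η)]
  refine tendsto_integral_filter_of_dominated_convergence (fun x => |x|)
    (.of_forall fun k => (hη.integrable_call k).aestronglyMeasurable)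
    ((eventually_ge_atTop 0).mono fun k hk => .of_forall fun x => ?_) hη.2.abs
    (.of_forall fun x => tendsto_const_nhds.congr' <|
      (eventually_ge_atTop x).mono fun k hk => (max_eq_right (sub_nonpos.2 hk)).symm)
  rw [Real.norm_of_nonneg (le_max_right _ _)]
  exact max_le (by linarith [le_abs_self x]) (abs_nonneg x)

lemma tendsto_Ppot_atBot (hη : MemM η) : Tendsto (Ppot η) atBot (𝓝 0) := by
  rw [← integral_zero ℝ ℝ (μ := η)]
  refine tendsto_integral_filter_of_dominated_convergence (fun x => |x|)
    (.of_forall fun k => (hη.integrable_put k).aestronglyMeasurable)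
    ((eventually_le_atBot 0).mono fun k hk => .of_forall fun x => ?_) hη.2.abs
    (.of_forall fun x => tendsto_const_nhds.congr' <|
      (eventually_le_atBot x).mono fun k hk => (max_eq_right (sub_nonpos.2 hk)).symm)
  rw [Real.norm_of_nonneg (le_max_right _ _)]
  exact max_le (by linarith [neg_abs_le x]) (abs_nonneg x)

lemma continuous_Ppot (hη : MemM η) : Continuous (Ppot η) := by
  have := hη.1
  refine (LipschitzWith.of_dist_le_mul (K := (η.real univ).toNNReal) fun k l => ?_).continuous
  rw [Real.dist_eq, Real.dist_eq, Ppot, Ppot,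
    ← integral_sub (hη.integrable_put k) (hη.integrable_put l), ← Real.norm_eq_abs,
    Real.coe_toNNReal _ measureReal_nonneg, mul_comm]
  refine norm_integral_le_of_norm_le_const (.of_forall fun x => ?_)
  simpa only [sub_sub_sub_cancel_right, Real.norm_eq_abs] using
    abs_max_sub_max_le_abs (k - x) (l - x) 0

lemma integrable_indicator_Iio (hη : MemM η) (a c : ℝ) :
    Integrable ((Iio a).indicator fun _ => c) η :=
  have := hη.1
  (integrable_const c).indicator measurableSet_Iio

lemma integral_put_add_indicator (hη : MemM η) (a c : ℝ) :
    ∫ x, (max (a - x) 0 + (Iio a).indicator (fun _ => c) x) ∂η =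
      Ppot η a + η.real (Iio a) * c := by
  rw [integral_add (hη.integrable_put a) (integrable_indicator_Iio hη a c),
    integral_indicator_const _ measurableSet_Iio, smul_eq_mul, Ppot]

lemma Ppot_add_mul_sub_le (hη : MemM η) (a k : ℝ) :
    Ppot η a + η.real (Iio a) * (k - a) ≤ Ppot η k := by
  rw [← integral_put_add_indicator hη]
  refine integral_mono ((hη.integrable_put a).add (integrable_indicator_Iio hη a _))
    (hη.integrable_put k) fun x => ?_
  rcases lt_or_ge x a with hx | hx
  · simp only [indicator_of_mem (mem_Iio.2 hx), max_eq_left (sub_nonneg.2 hx.le)]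
    exact (by ring : a - x + (k - a) = k - x).trans_le (le_max_left _ _)
  · simp only [indicator_of_notMem (notMem_Iio.2 hx), max_eq_right (sub_nonpos.2 hx), add_zero]
    exact le_max_right _ _

lemma Ppot_eq_of_measure_Ico_eq_zero (hη : MemM η) {a k : ℝ} (hak : a ≤ k)
    (h : η (Ico a k) = 0) : Ppot η k = Ppot η a + η.real (Iio a) * (k - a) := by
  rw [← integral_put_add_indicator hη, Ppot]
  refine integral_congr_ae ?_
  filter_upwards [measure_eq_zero_iff_ae_notMem.1 h] with x hx
  rcases lt_or_ge x a with hxa | hxa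
  · rw [indicator_of_mem (mem_Iio.2 hxa), max_eq_left (by linarith), max_eq_left (by linarith)]
    ring
  · have hkx : k ≤ x := not_lt.1 fun hxk => hx ⟨hxa, hxk⟩
    rw [indicator_of_notMem (notMem_Iio.2 hxa), max_eq_right (by linarith),
      max_eq_right (by linarith), add_zero]

lemma Ppot_le_of_measure_Iio_eq_zero (hη : MemM η) {b : ℝ} (h : η (Iio b) = 0) (k : ℝ) :
    Ppot η k ≤ η.real univ * max (k - b) 0 := by
  have := hη.1
  rw [← smul_eq_mul, ← integral_const]
  refine integral_mono_ae (hη.integrable_put k) (integrable_const _) ?_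
  filter_upwards [measure_eq_zero_iff_ae_notMem.1 h] with x hx
  exact max_le_max_right 0 (sub_le_sub_left (not_lt.1 hx) k)

lemma mul_le_integral_of_measure_Iio_eq_zero (hη : MemM η) {a : ℝ} (h : η (Iio a) = 0) :
    η.real univ * a ≤ ∫ x, x ∂η := by
  linarith [Cpot_sub_Ppot hη a, (Ppot_eq_zero_iff hη).2 h, Cpot_nonneg η a]

lemma integral_lt_mul_of_measure_Ici_eq_zero (hη : MemM η) (hη0 : η ≠ 0) {a : ℝ}
    (h : η (Ici a) = 0) : ∫ x, x ∂η < η.real univ * a := by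
  have hIio : η (Iio a) ≠ 0 := fun h' =>
    hη0 <| Measure.measure_univ_eq_zero.1 <| by
      rw [← Iio_union_Ici (a := a)]; exact measure_union_null h' h
  have hP : 0 < Ppot η a := (Ppot_nonneg η a).lt_of_ne' <| mt (Ppot_eq_zero_iff hη).1 hIio
  have hC : Cpot η a = 0 := (Cpot_eq_zero_iff hη).2 (measure_mono_null Ioi_subset_Ici_self h)
  linarith [Cpot_sub_Ppot hη a]

end Potentials

section ConvexDecreasingOrder

variable {η χ : Measure ℝ}

lemma LeCD.Ppot_le (h : LeCD η χ) (hη : MemM η) (hχ : MemM χ) (k : ℝ) : Ppot η k ≤ Ppot χ k :=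
  h _ (((convexOn_const k convex_univ).sub (concaveOn_id convex_univ)).sup
      (convexOn_const 0 convex_univ))
    (fun _ _ hxy => max_le_max_right 0 (sub_le_sub_left hxy k))
    (hη.integrable_put k) (hχ.integrable_put k)

lemma LeCD.integral_id_le (h : LeCD η χ) (hη : MemM η) (hχ : MemM χ) :
    ∫ x, x ∂χ ≤ ∫ x, x ∂η := by
  have hneg := h (fun x => -x) (concaveOn_id convex_univ).neg (fun _ _ => neg_le_neg)
    hη.2.neg hχ.2.neg
  rwa [integral_neg, integral_neg, neg_le_neg_iff] at hneg

lemma LeCD.real_univ_eq (h : LeCD η χ) (hη : MemM η) (hχ : MemM χ) :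
    η.real univ = χ.real univ := by
  have := hη.1
  have := hχ.1
  have hconst (c : ℝ) : η.real univ * c ≤ χ.real univ * c := by
    simpa only [integral_const, smul_eq_mul] using
      h (fun _ => c) (convexOn_const c convex_univ) antitone_const (integrable_const _)
        (integrable_const _)
  linarith [hconst 1, hconst (-1)]

/-- The measure with Lebesgue density `s ↦ η (-∞, s)`. By Tonelli it gives mass `P_η(k)` to
`(-∞, k)`, which turns inequalities between put potentials into inequalities between measures. -/
def cdfMeasure (η : Measure ℝ) : Measure ℝ :=
  volume.withDensity fun s => η (Iio s)

instance (η : Measure ℝ) : NullSingletonClass (cdfMeasure η) :=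
  inferInstanceAs (NullSingletonClass (volume.withDensity _))

lemma lintegral_cdfMeasure (η : Measure ℝ) [SFinite η] {φ : ℝ → ℝ≥0∞} (hφ : Measurable φ) :
    ∫⁻ s, φ s ∂(cdfMeasure η) = ∫⁻ x, (∫⁻ s in Ioi x, φ s) ∂η := by
  have hIio : Measurable fun s => η (Iio s) :=
    Monotone.measurable fun _ _ h => measure_mono (Iio_subset_Iio h)
  have hmeas : Measurable (Function.uncurry fun x => (Ioi x).indicator φ) :=
    (hφ.comp measurable_snd).indicator (measurableSet_lt measurable_fst measurable_snd)
  calc ∫⁻ s, φ s ∂(cdfMeasure η) = ∫⁻ s, (∫⁻ x, (Iio s).indicator (fun _ => φ s) x ∂η) := by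
        rw [cdfMeasure, lintegral_withDensity_eq_lintegral_mul _ hIio hφ]
        simp only [lintegral_indicator_const measurableSet_Iio, Pi.mul_apply, mul_comm]
    _ = ∫⁻ x, (∫⁻ s, (Ioi x).indicator φ s) ∂η := lintegral_lintegral_swap <|
        (hmeas.comp measurable_swap).aemeasurable
    _ = ∫⁻ x, (∫⁻ s in Ioi x, φ s) ∂η := by
        simp only [lintegral_indicator measurableSet_Ioi]

lemma cdfMeasure_Iio (hη : MemM η) (k : ℝ) : cdfMeasure η (Iio k) = ENNReal.ofReal (Ppot η k) := by
  have := hη.1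
  rw [Ppot, ofReal_integral_eq_lintegral_ofReal (hη.integrable_put k)
      (.of_forall fun x => le_max_right _ _), ← lintegral_indicator_one measurableSet_Iio,
    lintegral_cdfMeasure η (measurable_one.indicator measurableSet_Iio)]
  refine lintegral_congr fun x => ?_
  rw [lintegral_indicator_one measurableSet_Iio, Measure.restrict_apply measurableSet_Iio,
    Iio_inter_Ioi, Real.volume_Ioo, ENNReal.ofReal_max, ENNReal.ofReal_zero, max_eq_left zero_le]

lemma monotone_rightDeriv_of_convexOn {f : ℝ → ℝ} (hf : ConvexOn ℝ univ f) :
    Monotone fun s => derivWithin f (Ioi s) s := fun _ _ hab =>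
  hf.monotoneOn_rightDeriv (by simp) (by simp) hab

/-- The negated right derivative of `f`, cut off at `N`. When `f` is convex and non-increasing it
is nonnegative and non-increasing, and its integral over `(x, ∞)` is `f (min x N) - f N`. -/
def truncatedDescent (f : ℝ → ℝ) (N : ℝ) : ℝ → ℝ :=
  (Iio N).indicator fun s => -derivWithin f (Ioi s) s

lemma truncatedDescent_nonneg {f : ℝ → ℝ} (hf : Antitone f) (N : ℝ) :
    0 ≤ truncatedDescent f N :=
  indicator_nonneg fun _ _ => neg_nonneg.2 (hf.antitoneOn _).derivWithin_nonpos

lemma antitone_truncatedDescent {f : ℝ → ℝ} (hf : ConvexOn ℝ univ f) (hanti : Antitone f)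
    (N : ℝ) : Antitone (truncatedDescent f N) := fun a b hab => by
  by_cases hb : b < N
  · have ha : a < N := hab.trans_lt hb
    rw [truncatedDescent, indicator_of_mem (mem_Iio.2 hb), indicator_of_mem (mem_Iio.2 ha)]
    exact neg_le_neg (monotone_rightDeriv_of_convexOn hf hab)
  · rw [truncatedDescent, indicator_of_notMem (by simpa using hb)]
    exact truncatedDescent_nonneg hanti N a

lemma lintegral_truncatedDescent {f : ℝ → ℝ} (hf : ConvexOn ℝ univ f) (hanti : Antitone f)
    (N x : ℝ) : ∫⁻ s in Ioi x, ENNReal.ofReal (truncatedDescent f N s) =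
      ENNReal.ofReal (f (min x N) - f N) := by
  have hcut : (fun s => ENNReal.ofReal (truncatedDescent f N s)) =
      (Iio N).indicator fun s => ENNReal.ofReal (-derivWithin f (Ioi s) s) :=
    (indicator_comp_of_zero ENNReal.ofReal_zero).symm
  rw [hcut, lintegral_indicator measurableSet_Iio, Measure.restrict_restrict measurableSet_Iio,
    Iio_inter_Ioi]
  rcases le_total N x with hx | hx
  · simp [hx]
  have hint : IntervalIntegrable (fun s => derivWithin f (Ioi s) s) volume x N :=
    (monotone_rightDeriv_of_convexOn hf).intervalIntegrable
  have hftc : ∫ s in Ioo x N, derivWithin f (Ioi s) s = f N - f x := by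
    rw [← integral_Ioc_eq_integral_Ioo, ← intervalIntegral.integral_of_le hx]
    exact intervalIntegral.integral_eq_sub_of_hasDeriv_right_of_le hx
      ((hf.continuousOn isOpen_univ).mono (subset_univ _))
      (fun s _ => hf.hasDerivWithinAt_rightDeriv_of_mem_interior (by simp)) hint
  rw [min_eq_left hx, ← neg_sub, ← hftc, ← integral_neg, ofReal_integral_eq_lintegral_ofReal]
  · exact ((intervalIntegrable_iff_integrableOn_Ioo_of_le hx).1 hint).neg
  · exact .of_forall fun s => neg_nonneg.2 (hanti.antitoneOn _).derivWithin_nonpos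

lemma integrable_comp_min [IsFiniteMeasure η] {f : ℝ → ℝ} (hf : Antitone f)
    (hfη : Integrable f η) (N : ℝ) : Integrable (fun x => f (min x N)) η := by
  refine (hfη.abs.add (integrable_const |f N|)).mono'
    (hf.measurable.comp (measurable_id.min measurable_const)).aestronglyMeasurable
    (.of_forall fun x => ?_)
  rw [Pi.add_apply, Real.norm_eq_abs]
  rcases min_choice x N with h | h <;> rw [h] <;> linarith [abs_nonneg (f x), abs_nonneg (f N)]

lemma tendsto_integral_comp_min [IsFiniteMeasure η] {f : ℝ → ℝ} (hf : Antitone f)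
    (hfη : Integrable f η) :
    Tendsto (fun N => ∫ x, f (min x N) ∂η) atTop (𝓝 (∫ x, f x ∂η)) := by
  refine tendsto_integral_filter_of_dominated_convergence (fun x => |f x| + |f 0|)
    (.of_forall fun N => (integrable_comp_min hf hfη N).aestronglyMeasurable)
    ((eventually_ge_atTop 0).mono fun N hN => .of_forall fun x => ?_)
    (hfη.abs.add (integrable_const _))
    (.of_forall fun x => tendsto_const_nhds.congr' <|
      (eventually_ge_atTop x).mono fun N hN => by simp only [min_eq_left hN])
  rcases le_total x N with hx | hx
  · rw [min_eq_left hx, Real.norm_eq_abs]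
    exact le_add_of_nonneg_right (abs_nonneg _)
  · rw [min_eq_right hx, Real.norm_eq_abs, add_comm, ← max_add_min |f 0|]
    exact (abs_le_max_abs_abs (hf hx) (hf hN)).trans <| by
      rw [max_comm]; exact le_add_of_nonneg_right (le_min (abs_nonneg _) (abs_nonneg _))

lemma integral_comp_min_le_of_Ppot_le (hη : MemM η) (hχ : MemM χ)
    (hmass : η.real univ = χ.real univ) (h : ∀ k, Ppot η k ≤ Ppot χ k) {f : ℝ → ℝ}
    (hf : ConvexOn ℝ univ f) (hanti : Antitone f) (hfη : Integrable f η) (hfχ : Integrable f χ)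
    (N : ℝ) : ∫ x, f (min x N) ∂η ≤ ∫ x, f (min x N) ∂χ := by
  have := hη.1
  have := hχ.1
  have hφ := antitone_truncatedDescent hf hanti N
  have hpos (x : ℝ) : 0 ≤ f (min x N) - f N := sub_nonneg.2 (hanti (min_le_right _ _))
  have hcdf (k : ℝ) : cdfMeasure η (Iio k) ≤ cdfMeasure χ (Iio k) := by
    rw [cdfMeasure_Iio hη, cdfMeasure_Iio hχ]
    exact ENNReal.ofReal_le_ofReal (h k)
  have hlint : ∫⁻ x, ENNReal.ofReal (f (min x N) - f N) ∂η ≤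
      ∫⁻ x, ENNReal.ofReal (f (min x N) - f N) ∂χ := by
    simp only [← lintegral_truncatedDescent hf hanti]
    rw [← lintegral_cdfMeasure η hφ.measurable.ennreal_ofReal,
      ← lintegral_cdfMeasure χ hφ.measurable.ennreal_ofReal]
    exact lintegral_le_of_antitone hcdf hφ (truncatedDescent_nonneg hanti N)
  have hη' := integrable_comp_min hanti hfη N
  have hχ' := integrable_comp_min hanti hfχ N
  have hη_sub : Integrable (fun x => f (min x N) - f N) η := hη'.sub (integrable_const _)
  have hχ_sub : Integrable (fun x => f (min x N) - f N) χ := hχ'.sub (integrable_const _)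
  rw [← ofReal_integral_eq_lintegral_ofReal hη_sub (.of_forall hpos),
    ← ofReal_integral_eq_lintegral_ofReal hχ_sub (.of_forall hpos),
    ENNReal.ofReal_le_ofReal_iff (integral_nonneg hpos), integral_sub hη' (integrable_const _),
    integral_sub hχ' (integrable_const _), integral_const, integral_const, hmass] at hlint
  exact (sub_le_sub_iff_right _).1 hlint

theorem leCD_of_Ppot_le (hη : MemM η) (hχ : MemM χ) (hmass : η.real univ = χ.real univ)
    (h : ∀ k, Ppot η k ≤ Ppot χ k) : LeCD η χ := fun _ hf hanti hfη hfχ =>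
  have := hη.1
  have := hχ.1
  le_of_tendsto_of_tendsto' (tendsto_integral_comp_min hanti hfη)
    (tendsto_integral_comp_min hanti hfχ)
    (integral_comp_min_le_of_Ppot_le hη hχ hmass h hf hanti hfη hfχ)

end ConvexDecreasingOrder

section PutGap

variable {m S : Measure ℝ}

/-- The gap `P_χ - P_η` between put potentials. It is nonnegative when `η ≤_cd χ`, and it measures
how far mass of `χ` can be moved to the right before that order breaks. -/
def putGap (η χ : Measure ℝ) (k : ℝ) : ℝ := Ppot χ k - Ppot η k

lemma LeCD.putGap_nonneg (h : LeCD m S) (hm : MemM m) (hS : MemM S) (k : ℝ) : 0 ≤ putGap m S k :=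
  sub_nonneg.2 (h.Ppot_le hm hS k)

lemma continuous_putGap (hm : MemM m) (hS : MemM S) : Continuous (putGap m S) :=
  (continuous_Ppot hS).sub (continuous_Ppot hm)

lemma tendsto_putGap_atBot (hm : MemM m) (hS : MemM S) :
    Tendsto (putGap m S) atBot (𝓝 0) := by
  have hlim := (tendsto_Ppot_atBot hS).sub (tendsto_Ppot_atBot hm)
  rwa [sub_zero] at hlim

lemma putGap_eq (hm : MemM m) (hS : MemM S) (hmass : m.real univ = S.real univ) (k : ℝ) :
    putGap m S k = (∫ x, x ∂m - ∫ x, x ∂S) - (Cpot m k - Cpot S k) := by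
  have hm_k := Cpot_sub_Ppot hm k
  rw [hmass] at hm_k
  rw [putGap]
  linarith [Cpot_sub_Ppot hS k]

lemma tendsto_putGap_atTop (hm : MemM m) (hS : MemM S) (hmass : m.real univ = S.real univ) :
    Tendsto (putGap m S) atTop (𝓝 (∫ x, x ∂m - ∫ x, x ∂S)) := by
  rw [funext (putGap_eq hm hS hmass)]
  simpa only [sub_zero] using
    ((tendsto_Cpot_atTop hm).sub (tendsto_Cpot_atTop hS)).const_sub (∫ x, x ∂m - ∫ x, x ∂S)

/-- Otherwise `P_S` would be affine on `[b, x₀]`, so that the gap, which has left slope at most `ε`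
at `b`, could not exceed the line at `x₀`. -/
lemma measure_Ico_ne_zero_of_supporting_line (hm : MemM m) (hS : MemM S) {b x₀ ε : ℝ}
    (hb : b ≤ x₀) (hline : ∀ k ≤ b, putGap m S b + ε * (k - b) ≤ putGap m S k)
    (hx₀ : putGap m S b + ε * (x₀ - b) < putGap m S x₀) : S (Ico b x₀) ≠ 0 := fun h0 => by
  have := hS.1
  simp only [putGap] at hline hx₀
  have hslope : S.real (Iio b) ≤ m.real (Iio b) + ε := by
    refine measureReal_Iio_le_of_forall_lt fun z hz => ?_
    have hS_z := Ppot_add_mul_sub_le hS z b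
    have hm_b := Ppot_add_mul_sub_le hm b z
    refine le_of_mul_le_mul_right ?_ (sub_pos.2 hz)
    linarith [hline z hz.le]
  have hS_x₀ := Ppot_eq_of_measure_Ico_eq_zero hS hb h0
  have hm_x₀ := Ppot_add_mul_sub_le hm b x₀
  have hmul := mul_le_mul_of_nonneg_right hslope (sub_nonneg.2 hb)
  linarith

lemma exists_nnreal_smul_Ppot_le {η : Measure ℝ} (hη : MemM η) {b ε : ℝ} (hb : η (Iio b) = 0)
    (hε : 0 < ε) : ∃ c : ℝ≥0, 0 < c ∧ c ≤ 1 ∧ ∀ k, Ppot (c • η) k ≤ ε * max (k - b) 0 := by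
  obtain ⟨c, ⟨hc1, hcη⟩, hc : 0 < c⟩ := ((eventually_nhdsGT_zero_mul_lt one_pos 1).and
    (eventually_nhdsGT_zero_mul_lt hε (η.real univ)) |>.and self_mem_nhdsWithin).exists
  rw [mul_one] at hc1
  lift c to ℝ≥0 using hc.le
  refine ⟨c, mod_cast hc, mod_cast hc1.le, fun k => ?_⟩
  calc Ppot (c • η) k ≤ c * (η.real univ * max (k - b) 0) := by
        rw [Ppot_smul]
        gcongr
        exact Ppot_le_of_measure_Iio_eq_zero hη hb k
    _ ≤ ε * max (k - b) 0 := by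
        rw [← mul_assoc]
        gcongr

lemma exists_le_Ppot_le_putGap (hm : MemM m) (hS : MemM S) (hgap : ∀ k, 0 ≤ putGap m S k)
    {x₀ : ℝ} (hx₀ : 0 < putGap m S x₀) :
    ∃ ρ ≤ S, ρ ≠ 0 ∧ ρ (Ici x₀) = 0 ∧ ∀ k ≤ x₀, Ppot ρ k ≤ putGap m S k := by
  obtain ⟨b, hb, ε, hε, hline, hlt⟩ := exists_supporting_line_of_tendsto_atBot
    (continuous_putGap hm hS) hgap (tendsto_putGap_atBot hm hS) hx₀
  have hIco := measure_Ico_ne_zero_of_supporting_line hm hS hb.le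
    (fun k hk => hline k (hk.trans hb.le)) hlt
  have hσS : S.restrict (Ico b x₀) ≤ S := Measure.restrict_le_self
  have hσb : S.restrict (Ico b x₀) (Iio b) = 0 :=
    restrict_apply_eq_zero_of_disjoint measurableSet_Iio <|
      (Iio_disjoint_Ici le_rfl).mono_right Ico_subset_Ici_self
  have hσx₀ : S.restrict (Ico b x₀) (Ici x₀) = 0 :=
    restrict_apply_eq_zero_of_disjoint measurableSet_Ici <|
      (Iio_disjoint_Ici le_rfl).symm.mono_right Ico_subset_Iio_self
  obtain ⟨c, hc, hc1, hP⟩ := exists_nnreal_smul_Ppot_le (hS.mono hσS) hσb hε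
  refine ⟨c • S.restrict (Ico b x₀), (nnreal_smul_measure_le hc1 _).trans hσS,
    smul_ne_zero hc.ne' (mt Measure.restrict_eq_zero.1 hIco), ?_,
    fun k hk => (hP k).trans ?_⟩
  · rw [Measure.smul_apply, hσx₀, smul_zero]
  · rcases le_total k b with hkb | hbk
    · rw [max_eq_right (sub_nonpos.2 hkb), mul_zero]
      exact hgap k
    · rw [max_eq_left (sub_nonneg.2 hbk)]
      linarith [hgap b, hline k hk]

end PutGap

section Shadow

variable {m S T ρ τ : Measure ℝ}

lemma IsShadow.integral_le_of_exchange (hS : IsShadow m (S + T) S) (hm : MemM m) (hT : MemM T)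
    (hρ : ρ ≤ S) (hτ : τ ≤ T) (hmass : ρ.real univ = τ.real univ)
    (h : ∀ k, Ppot m k + Ppot ρ k ≤ Ppot S k + Ppot τ k) : ∫ x, x ∂τ ≤ ∫ x, x ∂ρ := by
  obtain ⟨hSM, hmS, -, hmin⟩ := hS
  have hρM := hSM.mono hρ
  have hτM := hT.mono hτ
  have := hρM.1
  have := hτM.1
  obtain ⟨R, rfl⟩ : ∃ R, S = R + ρ := ⟨S - ρ, (Measure.sub_add_cancel_of_le hρ).symm⟩
  have hR : MemM R := hSM.mono (Measure.le_add_right le_rfl)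
  have := hR.1
  have hcd : LeCD m (R + τ) := by
    refine leCD_of_Ppot_le hm (hR.add hτM) ?_ fun k => ?_
    · rw [hmS.real_univ_eq hm hSM, measureReal_add_apply, measureReal_add_apply, hmass]
    · have hk := h k
      rw [Ppot_add hR hρM] at hk
      rw [Ppot_add hR hτM]
      linarith
  have hle : R + τ ≤ R + ρ + T := add_le_add (Measure.le_add_right le_rfl) hτ
  have hmean := (hmin _ (hR.add hτM) hcd fun A _ => hle A).integral_id_le hSM (hR.add hτM)
  rw [integral_add_measure hR.2 hτM.2, integral_add_measure hR.2 hρM.2] at hmean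
  exact (add_le_add_iff_left _).1 hmean

lemma IsShadow.integral_le_of_le_putGap (hS : IsShadow m (S + T) S) (hm : MemM m) (hT : MemM T)
    (hρ : ρ ≤ S) (hτ : τ ≤ T) (hmass : ρ.real univ = τ.real univ) {x₀ : ℝ}
    (hρx₀ : ρ (Ici x₀) = 0) (hleft : ∀ k ≤ x₀, Ppot ρ k ≤ putGap m S k)
    (hright : ∀ k ≥ x₀, ∫ x, x ∂τ - ∫ x, x ∂ρ ≤ putGap m S k) : ∫ x, x ∂τ ≤ ∫ x, x ∂ρ := by
  have hρM := hS.1.mono hρ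
  have hτM := hT.mono hτ
  refine hS.integral_le_of_exchange hm hT hρ hτ hmass fun k => ?_
  rcases le_total k x₀ with hk | hk
  · have hgap := hleft k hk
    rw [putGap] at hgap
    linarith [Ppot_nonneg τ k]
  · have hgap := hright k hk
    rw [putGap] at hgap
    have hCρ : Cpot ρ k = 0 := (Cpot_eq_zero_iff hρM).2 <|
      measure_mono_null (Ioi_subset_Ici_self.trans (Ici_subset_Ici.2 hk)) hρx₀
    have hρ_k := Cpot_sub_Ppot hρM k
    rw [hmass] at hρ_k
    linarith [Cpot_sub_Ppot hτM k, Cpot_nonneg τ k]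

lemma IsShadow.mul_integral_le_of_le_putGap (hS : IsShadow m (S + T) S) (hm : MemM m)
    (hT : MemM T) (hρ : ρ ≤ S) (hτ : τ ≤ T) {x₀ κ : ℝ} (hκ : 0 < κ) (hρx₀ : ρ (Ici x₀) = 0)
    (hleft : ∀ k ≤ x₀, Ppot ρ k ≤ putGap m S k) (hright : ∀ k ≥ x₀, κ ≤ putGap m S k) :
    ρ.real univ * ∫ x, x ∂τ ≤ τ.real univ * ∫ x, x ∂ρ := by
  by_contra! hlt
  let r : ℝ≥0 := (τ univ).toNNReal
  let s : ℝ≥0 := (ρ univ).toNNReal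
  obtain ⟨t, ⟨⟨htr, hts⟩, htκ⟩, ht : 0 < t⟩ :=
    ((eventually_nhdsGT_zero_mul_lt one_pos r).and (eventually_nhdsGT_zero_mul_lt one_pos s) |>.and
      (eventually_nhdsGT_zero_mul_lt hκ (s * ∫ x, x ∂τ - r * ∫ x, x ∂ρ)) |>.and
      self_mem_nhdsWithin).exists
  lift t to ℝ≥0 using ht.le
  have hle : ∫ x, x ∂((t * s) • τ) ≤ ∫ x, x ∂((t * r) • ρ) := by
    refine hS.integral_le_of_le_putGap hm hT (x₀ := x₀)
      ((nnreal_smul_measure_le (mod_cast htr.le) ρ).trans hρ)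
      ((nnreal_smul_measure_le (mod_cast hts.le) τ).trans hτ) ?_ ?_ (fun k hk => ?_) fun k hk => ?_
    · rw [measureReal_nnreal_smul_apply, measureReal_nnreal_smul_apply, NNReal.coe_mul,
        NNReal.coe_mul, mul_assoc, mul_assoc]
      change (t * (r * s) : ℝ) = t * (s * r)
      rw [mul_comm (r : ℝ)]
    · rw [Measure.smul_apply, hρx₀, smul_zero]
    · rw [Ppot_smul]
      exact (mul_le_of_le_one_left (Ppot_nonneg ρ k) (mod_cast htr.le)).trans (hleft k hk)
    · rw [integral_smul_nnreal_measure, integral_smul_nnreal_measure, NNReal.smul_def,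
        NNReal.smul_def, smul_eq_mul, smul_eq_mul, NNReal.coe_mul, NNReal.coe_mul]
      linarith [hright k hk]
  rw [integral_smul_nnreal_measure, integral_smul_nnreal_measure, mul_smul, mul_smul] at hle
  exact hlt.not_ge (le_of_smul_le_smul_left hle (mod_cast ht))

lemma IsShadow.measure_Ici_eq_zero (hS : IsShadow m (S + T) S) (hm : MemM m) (hT : MemM T)
    {x₀ κ : ℝ} (hκ : 0 < κ) (hgap : ∀ k ≥ x₀, κ ≤ putGap m S k) : T (Ici x₀) = 0 := by
  by_contra hT0
  obtain ⟨ρ, hρS, hρ0, hρx₀, hρgap⟩ := exists_le_Ppot_le_putGap hm hS.1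
    (hS.2.1.putGap_nonneg hm hS.1) (hκ.trans_le (hgap x₀ le_rfl))
  set τ := T.restrict (Ici x₀)
  have hτT : τ ≤ T := Measure.restrict_le_self
  have hτx₀ : τ (Iio x₀) = 0 :=
    restrict_apply_eq_zero_of_disjoint measurableSet_Iio (Iio_disjoint_Ici le_rfl)
  have hρM := hS.1.mono hρS
  have hτM := hT.mono hτT
  have := hτM.1
  have : NeZero τ := ⟨mt Measure.restrict_eq_zero.1 hT0⟩
  have hlt : τ.real univ * ∫ x, x ∂ρ < ρ.real univ * ∫ x, x ∂τ :=
    calc τ.real univ * ∫ x, x ∂ρ < τ.real univ * (ρ.real univ * x₀) := by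
          gcongr
          · exact measureReal_univ_pos
          · exact integral_lt_mul_of_measure_Ici_eq_zero hρM hρ0 hρx₀
      _ = ρ.real univ * (τ.real univ * x₀) := by ring
      _ ≤ ρ.real univ * ∫ x, x ∂τ := by
          gcongr
          exact mul_le_integral_of_measure_Iio_eq_zero hτM hτx₀
  exact hlt.not_ge (hS.mul_integral_le_of_le_putGap hm hT hρS hτT hκ hρx₀ hρgap hgap)

lemma IsShadow.exists_putGap_add_Cpot_lt (hS : IsShadow m (S + T) S) (hm : MemM m) (hT : MemM T)
    {δ : ℝ} (hδ : 0 < δ) : ∃ k, putGap m S k + Cpot T k < δ := by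
  obtain ⟨hSM, hmS, -⟩ := id hS
  have htop := tendsto_putGap_atTop hm hSM (hmS.real_univ_eq hm hSM)
  have hcont := continuous_putGap hm hSM
  by_contra! h
  have hmean : δ ≤ ∫ x, x ∂m - ∫ x, x ∂S := by
    have hlim := htop.add (tendsto_Cpot_atTop hT)
    rw [add_zero] at hlim
    exact ge_of_tendsto' hlim h
  obtain ⟨N, hN⟩ := eventually_atTop.1 (htop.eventually_const_lt ((half_lt_self hδ).trans_le hmean))
  let L := {k | putGap m S k ≤ δ / 2}
  have hL_ne : L.Nonempty :=
    ((tendsto_putGap_atBot hm hSM).eventually_le_const (half_pos hδ)).exists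
  have hL_bdd : BddAbove L := ⟨N, fun k hk => not_lt.1 fun hNk => (hN k hNk.le).not_ge hk⟩
  have hL_mem : putGap m S (sSup L) ≤ δ / 2 :=
    (isClosed_le hcont continuous_const).csSup_mem hL_ne hL_bdd
  obtain ⟨y, hy_gap, hy : sSup L < y⟩ :=
    (((hcont.tendsto (sSup L)).mono_left nhdsWithin_le_nhds).eventually_lt_const
      (hL_mem.trans_lt (half_lt_self hδ)) |>.and (self_mem_nhdsWithin (s := Ioi (sSup L)))).exists
  have hTy : T (Ici y) = 0 := hS.measure_Ici_eq_zero hm hT (half_pos hδ) fun k hk =>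
    not_lt.1 fun hkL => (le_csSup hL_bdd hkL.le).not_gt (hy.trans_le hk)
  have hCy : Cpot T y = 0 := (Cpot_eq_zero_iff hT).2 (measure_mono_null Ioi_subset_Ici_self hTy)
  linarith [h y]

end Shadow

lemma memM_muU {μ : Measure ℝ} (hμ : MemM μ) (u : ℝ) : MemM (muU μ u) := by
  unfold muU
  split_ifs
  · exact ⟨inferInstance, integrable_zero_measure⟩
  · exact hμ
  · have hdirac : MemM (Measure.dirac (quantile μ u)) :=
      ⟨inferInstance, integrable_dirac (by simp)⟩
    exact (hμ.mono Measure.restrict_le_self).add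
      ⟨Measure.smul_finite _ ENNReal.ofReal_ne_top, hdirac.2.smul_measure ENNReal.ofReal_ne_top⟩

theorem c_eq_mean_difference_general {m ν S : Measure ℝ} (hm : MemM m) (hν : MemM ν)
    (hS : IsShadow m ν S) : (⨆ k, (Cpot m k - Cpot ν k)) = ∫ x, x ∂m - ∫ x, x ∂S := by
  obtain ⟨hSM, hmS, hSν, -⟩ := id hS
  have := hSM.1
  obtain ⟨T, hT, rfl⟩ : ∃ T, MemM T ∧ ν = S + T :=
    ⟨ν - S, hν.mono Measure.sub_le, by
      rw [add_comm, Measure.sub_add_cancel_of_le (Measure.le_iff.2 hSν)]⟩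
  have hid (k : ℝ) : Cpot m k - Cpot (S + T) k =
      (∫ x, x ∂m - ∫ x, x ∂S) - (putGap m S k + Cpot T k) := by
    rw [Cpot_add hSM hT, putGap_eq hm hSM (hmS.real_univ_eq hm hSM)]
    ring
  refine ciSup_eq_of_forall_le_of_forall_lt_exists_gt (fun k => ?_) fun w hw => ?_
  · linarith [hid k, hmS.putGap_nonneg hm hSM k, Cpot_nonneg T k]
  · obtain ⟨k, hk⟩ := hS.exists_putGap_add_Cpot_lt hm hT (sub_pos.2 hw)
    exact ⟨k, by linarith [hid k]⟩

/-- Lemma 4.2: `c(u)` equals the difference of the means of `μ_u` and of its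
shadow in `ν`. -/
theorem c_eq_mean_difference
    (μ ν : MeasureTheory.Measure ℝ)
    [MeasureTheory.IsProbabilityMeasure μ] [MeasureTheory.IsProbabilityMeasure ν]
    (hμ : MeasureTheory.Integrable (fun x : ℝ => x) μ)
    (hν : MeasureTheory.Integrable (fun x : ℝ => x) ν)
    (hcd : LeCD μ ν)
    (u : ℝ) (hu : u ∈ Set.Ioo (0:ℝ) 1)
    (Su : MeasureTheory.Measure ℝ) (hSu : IsShadow (muU μ u) ν Su) :
    (⨆ k : ℝ, (Cpot (muU μ u) k - Cpot ν k)) =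
      (∫ x, x ∂(muU μ u)) - ∫ x, x ∂Su := by
  exact c_eq_mean_difference_general (memM_muU ⟨inferInstance, hμ⟩ u) ⟨inferInstance, hν⟩ hSu
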